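/- Let L be the poset of dual order ideals of ℕⁿ (with its componentwise partial order), ordered by inclusion. Then L contains no infinite antichain; that is, every set of pairwise incomparable upper sets of ℕⁿ is finite. -/

import Mathlib

/-!
Complementation turns the problem into showing that the lower sets of `ℕⁿ` are well-quasi-ordered
by inclusion. The lower sets of `ℕ` are, since they are even well-ordered. Moreover the property
passes to binary products: if `α` and `β` have it, a lower set of `α × β` has only finitely many
slices `A ⊆ α`, because the slice over `b` shrinks as `b` grows. It is therefore the union of
finitely many rectangles `A × {b | A ⊆ slice over b}`, and by Higman's lemma finite sets of
rectangles are well-quasi-ordered by domination, which implies inclusion of their unions.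
-/

section WellQuasiOrder

variable {α β : Type*}

theorem finite_range_of_antitone [Preorder α] [WellQuasiOrderedLE α] [PartialOrder β]
    [WellFoundedLT β] {f : α → β} (hf : Antitone f) : (Set.range f).Finite := by
  by_contra hinf
  let e : ℕ ↪ Set.range f := Set.Infinite.natEmbedding _ hinf
  choose a ha using fun k ↦ (e k).2
  have hinj : Function.Injective (f ∘ a) := fun k l hkl ↦
    e.injective (Subtype.ext (by rw [← ha, ← ha]; exact hkl))
  obtain ⟨g, hg⟩ := (wellQuasiOrdered_le (α := α)).exists_monotone_subseq a
  have hanti : Antitone (f ∘ a ∘ g) := fun k l hkl ↦ hf (hg k l hkl)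
  exact not_strictAnti_of_wellFoundedLT _ (hanti.strictAnti_of_injective (hinj.comp g.injective))

theorem wellQuasiOrdered_finset_forall_exists {r : α → α → Prop} [IsPreorder α r]
    (hr : WellQuasiOrdered r) :
    WellQuasiOrdered fun s t : Finset α ↦ ∀ a ∈ s, ∃ b ∈ t, r a b := by
  intro f
  have higman := Set.PartiallyWellOrderedOn.partiallyWellOrderedOn_sublistForall₂ r
    (Set.partiallyWellOrderedOn_univ_iff.2 hr)
  obtain ⟨m, n, hmn, hsub⟩ := higman.exists_lt (f := fun k ↦ (f k).toList) fun _ _ _ ↦ trivial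
  obtain ⟨l, hl, hln⟩ := List.sublistForall₂_iff.1 hsub
  refine ⟨m, n, hmn, fun a ha ↦ ?_⟩
  obtain ⟨i, hi, rfl⟩ := List.getElem_of_mem (Finset.mem_toList.2 ha)
  have hil : i < l.length := hl.length_eq ▸ hi
  exact ⟨l[i], Finset.mem_toList.1 (hln.subset (List.getElem_mem hil)), hl.get hi hil⟩

theorem wellQuasiOrderedLE_of_forall_exists_finset_sup_eq [Preorder α] [WellQuasiOrderedLE α]
    [SemilatticeSup β] [OrderBot β] {f : α → β} (hf : Monotone f)
    (hsup : ∀ b, ∃ s : Finset α, s.sup f = b) : WellQuasiOrderedLE β where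
  wqo := by
    refine (wellQuasiOrdered_finset_forall_exists wellQuasiOrdered_le).of_surjective
      ⟨fun s : Finset α ↦ s.sup f, fun {s t} hst ↦ Finset.sup_le fun a ha ↦ ?_⟩ hsup
    obtain ⟨b, hb, hab⟩ := hst a ha
    exact (hf hab).trans (Finset.le_sup hb)

end WellQuasiOrder

section LowerSet

section LE

variable {α : Type*} [LE α]

theorem finite_of_isAntichain_of_isUpperSet [WellQuasiOrderedLE (LowerSet α)] {𝓐 : Set (Set α)}
    (hac : IsAntichain (· ⊆ ·) 𝓐) (hup : ∀ U ∈ 𝓐, IsUpperSet U) : 𝓐.Finite := by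
  refine hac.flip.finite_of_partiallyWellOrderedOn fun U ↦ ?_
  obtain ⟨m, n, hmn, hle⟩ := wellQuasiOrdered_le fun k ↦
    (⟨(U k : Set α)ᶜ, (hup _ (U k).2).compl⟩ : LowerSet α)
  exact ⟨m, n, hmn, Set.compl_subset_compl.1 hle⟩

instance wellFoundedLT_lowerSet [WellQuasiOrderedLE α] : WellFoundedLT (LowerSet α) := by
  rw [WellFoundedLT, isWellFounded_iff, RelEmbedding.wellFounded_iff_isEmpty]
  refine ⟨fun D ↦ ?_⟩
  have hD : StrictAnti D := fun k l hkl ↦ D.map_rel_iff.2 hkl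
  choose a ha ha' using fun k : ℕ ↦ Set.exists_of_ssubset (hD k.lt_succ_self)
  obtain ⟨m, n, hmn, hle⟩ := wellQuasiOrdered_le a
  exact ha' m ((D (m + 1)).lower hle (hD.antitone hmn (ha n)))

end LE

variable {α β : Type*} [Preorder α] [Preorder β]

theorem wellQuasiOrderedLE_of_lowerSet [WellQuasiOrderedLE (LowerSet α)] :
    WellQuasiOrderedLE α where
  wqo a := by
    obtain ⟨m, n, hmn, hle⟩ := wellQuasiOrdered_le (LowerSet.Iic ∘ a)
    exact ⟨m, n, hmn, LowerSet.Iic_le.1 hle⟩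

theorem wellQuasiOrderedLE_lowerSet_of_surjective [WellQuasiOrderedLE (LowerSet α)]
    {f : α → β} (hsurj : Function.Surjective f) (hf : Monotone f) :
    WellQuasiOrderedLE (LowerSet β) where
  wqo D := by
    obtain ⟨m, n, hmn, hle⟩ := wellQuasiOrdered_le fun k ↦
      (⟨f ⁻¹' D k, (D k).lower.preimage hf⟩ : LowerSet α)
    exact ⟨m, n, hmn, hsurj.preimage_subset_preimage_iff.1 hle⟩

/-- The slice of a lower set `D` of `α × β` over `b`. The slices of `D` serve as the first factors
in the decomposition of `D` into rectangles. -/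
def lowerSetSlice (D : LowerSet (α × β)) (b : β) : LowerSet α where
  carrier := {a | (a, b) ∈ D}
  lower' _ _ h ha := D.lower (Prod.mk_le_mk.2 ⟨h, le_rfl⟩) ha

theorem antitone_lowerSetSlice (D : LowerSet (α × β)) : Antitone (lowerSetSlice D) :=
  fun _ _ h _ ha ↦ D.lower (Prod.mk_le_mk.2 ⟨le_rfl, h⟩) ha

theorem exists_finset_sup_prod_eq [WellFoundedLT (LowerSet α)] [WellQuasiOrderedLE β]
    (D : LowerSet (α × β)) :
    ∃ s : Finset (LowerSet α × LowerSet β), (s.sup fun p ↦ p.1 ×ˢ p.2) = D := by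
  classical
  have hslice := antitone_lowerSetSlice D
  let support (A : LowerSet α) : LowerSet β :=
    ⟨{b | A ≤ lowerSetSlice D b}, fun _ _ h hA ↦ hA.trans (hslice h)⟩
  have hfin := finite_range_of_antitone hslice
  refine ⟨hfin.toFinset.image fun A ↦ (A, support A), le_antisymm ?_ ?_⟩
  · refine Finset.sup_le fun p hp ↦ ?_
    obtain ⟨A, -, rfl⟩ := Finset.mem_image.1 hp
    rintro ⟨a, b⟩ ⟨ha, hb⟩
    exact hb ha
  · rintro ⟨a, b⟩ hab
    have hmem : lowerSetSlice D b ∈ hfin.toFinset := hfin.mem_toFinset.2 ⟨b, rfl⟩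
    exact Finset.le_sup (f := fun p : LowerSet α × LowerSet β ↦ p.1 ×ˢ p.2)
      (Finset.mem_image_of_mem _ hmem) ⟨hab, le_refl (lowerSetSlice D b)⟩

instance wellQuasiOrderedLE_lowerSet_prod [WellQuasiOrderedLE (LowerSet α)]
    [WellQuasiOrderedLE (LowerSet β)] : WellQuasiOrderedLE (LowerSet (α × β)) :=
  have : WellQuasiOrderedLE β := wellQuasiOrderedLE_of_lowerSet
  wellQuasiOrderedLE_of_forall_exists_finset_sup_eq
    (fun _ _ h ↦ LowerSet.prod_mono (Prod.le_def.1 h).1 (Prod.le_def.1 h).2)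
    exists_finset_sup_prod_eq

instance wellQuasiOrderedLE_lowerSet_pi {ι : Type*} [Finite ι] {π : ι → Type*}
    [∀ i, Preorder (π i)] [∀ i, WellQuasiOrderedLE (LowerSet (π i))] :
    WellQuasiOrderedLE (LowerSet (∀ i, π i)) := by
  induction ι using Finite.induction_empty_option with
  | of_equiv e ih =>
    refine wellQuasiOrderedLE_lowerSet_of_surjective (Equiv.piCongrLeft π e).surjective
      fun x y hxy ↦ ?_
    refine e.surjective.forall.2 fun i ↦ ?_
    simpa only [Equiv.piCongrLeft_apply_apply] using hxy i
  | h_empty => exact Finite.to_wellQuasiOrderedLE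
  | h_option ih =>
    exact wellQuasiOrderedLE_lowerSet_of_surjective
      (Equiv.piOptionEquivProd (β := π)).symm.surjective
      fun _ _ h ↦ Option.forall.2 (Prod.le_def.1 h)

end LowerSet

theorem upperSets_of_Nn_no_infinite_antichain_general {ι : Type*} [Finite ι] {α : ι → Type*}
    [∀ i, Preorder (α i)] [∀ i, WellQuasiOrderedLE (LowerSet (α i))]
    (𝓐 : Set (Set (∀ i, α i))) (hup : ∀ U ∈ 𝓐, IsUpperSet U)
    (hac : IsAntichain (· ⊆ ·) 𝓐) : 𝓐.Finite :=
  finite_of_isAntichain_of_isUpperSet hac hup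

/-- **Antichains of dual order ideals of ℕⁿ are finite.**  In the poset of dual order
ideals (upper sets) of `ℕⁿ` with its componentwise order, ordered by inclusion,
every antichain (collection of pairwise incomparable upper sets) is finite. -/
theorem upperSets_of_Nn_no_infinite_antichain {n : ℕ}
    (𝓐 : Set (Set (Fin n → ℕ))) (hup : ∀ U ∈ 𝓐, IsUpperSet U)
    (hac : IsAntichain (· ⊆ ·) 𝓐) : 𝓐.Finite :=
  upperSets_of_Nn_no_infinite_antichain_general 𝓐 hup hac
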